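/- arXiv:math/0610240 — 2 statements merged into one kernel-verified Lean document; each statement's English description precedes it below -/
import Mathlib

section
/- For every s ∈ ℝ the discrete Hermite kernel K_s is an orthogonal projection kernel on ℕ: it is symmetric, for all x, y ∈ ℕ the series Σ_{z=0}^∞ K_s(x,z)·K_s(z,y) converges absolutely and equals K_s(x,y), and 0 ≤ K_s(x,x) ≤ 1 for all x ∈ ℕ. -/
open scoped Nat

noncomputable section

/-- The discrete Hermite kernel with parameter `s ∈ ℝ`:
`K_s(x,y) = (2π·x!·y!)^{−1/2} ∫_s^∞ e^{−t²/2}·He_x(t)·He_y(t) dt` for `x, y ∈ ℕ`,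
where `He_n` is the probabilists' Hermite polynomial. -/
def discreteHermiteKernel (s : ℝ) (x y : ℕ) : ℝ :=
  (Real.sqrt (2 * Real.pi * (x ! : ℝ) * (y ! : ℝ)))⁻¹ *
    ∫ t in Set.Ioi s, Real.exp (-t ^ 2 / 2) * Polynomial.aeval t (Polynomial.hermite x) *
      Polynomial.aeval t (Polynomial.hermite y)

/-!
The normalized Hermite polynomials form a Hilbert basis of `L²` of the standard Gaussian measure,
and `K_s` is the matrix in that basis of multiplication by the indicator of `(s, ∞)`, which is an
orthogonal projection; Parseval's identity gives `K_s = K_s * K_s`. On the diagonal this reads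
`K_s(x,x) = ∑ z, K_s(x,z)² ≥ K_s(x,x)²`, so `0 ≤ K_s(x,x) ≤ 1`.

Orthogonality follows from Gaussian integration by parts. Completeness holds for the polynomials in
`L²(μ)` whenever `μ` has exponential moments: if `f` is orthogonal to all of them, then the positive
and negative parts of `f` are the densities of two measures with the same moments, and exponential
moments make a measure determined by its moments.
-/

open MeasureTheory ProbabilityTheory Polynomial Filter Topology

section MomentProblem

theorem eventuallyEq_of_forall_iteratedDeriv_eq {𝕜 : Type*} [NontriviallyNormedField 𝕜]
    [CompleteSpace 𝕜] [CharZero 𝕜] {f g : 𝕜 → 𝕜} {z : 𝕜}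
    (hf : AnalyticAt 𝕜 f z) (hg : AnalyticAt 𝕜 g z)
    (h : ∀ n, iteratedDeriv n f z = iteratedDeriv n g z) : f =ᶠ[𝓝 z] g := by
  have hf_sum := hf.hasFPowerSeriesAt.eventually_hasSum_sub
  have hg_sum := hg.hasFPowerSeriesAt.eventually_hasSum_sub
  simp only [h] at hf_sum
  filter_upwards [hf_sum, hg_sum] with w hfw hgw using hfw.unique hgw

theorem measure_eq_of_forall_integral_pow_eq {μ ν : Measure ℝ} [IsFiniteMeasure μ]
    [IsFiniteMeasure ν] (hμ : 0 ∈ interior (integrableExpSet id μ))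
    (hν : 0 ∈ interior (integrableExpSet id ν)) (h : ∀ n : ℕ, ∫ x, x ^ n ∂μ = ∫ x, x ^ n ∂ν) :
    μ = ν := by
  have hiter (n : ℕ) :
      iteratedDeriv n (complexMGF id μ) 0 = iteratedDeriv n (complexMGF id ν) 0 := by
    rw [iteratedDeriv_complexMGF (by simpa using hμ), iteratedDeriv_complexMGF (by simpa using hν)]
    simp only [id, zero_mul, Complex.exp_zero, mul_one, ← Complex.ofReal_pow,
      integral_complex_ofReal, h]
  have hnear : complexMGF id μ =ᶠ[𝓝 0] complexMGF id ν :=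
    eventuallyEq_of_forall_iteratedDeriv_eq (analyticAt_complexMGF (by simpa using hμ))
      (analyticAt_complexMGF (by simpa using hν)) hiter
  let strip : Set ℂ := Complex.reLm ⁻¹'
    (interior (integrableExpSet id μ) ∩ interior (integrableExpSet id ν))
  have hstrip : IsPreconnected strip :=
    ((convex_integrableExpSet.interior.inter convex_integrableExpSet.interior).linear_preimage
      Complex.reLm).isPreconnected
  have heq : Set.EqOn (complexMGF id μ) (complexMGF id ν) strip :=
    (analyticOnNhd_complexMGF.mono fun _ hz ↦ hz.1).eqOn_of_preconnected_of_eventuallyEq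
      (analyticOnNhd_complexMGF.mono fun _ hz ↦ hz.2) hstrip (z₀ := 0) ⟨hμ, hν⟩ hnear
  refine Measure.ext_of_charFun (funext fun t ↦ ?_)
  rw [← complexMGF_id_mul_I, ← complexMGF_id_mul_I]
  exact heq (by simpa [strip] using ⟨hμ, hν⟩)

variable {μ : Measure ℝ} {f : ℝ → ℝ}

lemma zero_mem_interior_integrableExpSet_withDensity_ofReal
    (hexp : ∀ᶠ t in 𝓝 0, Integrable (fun x ↦ Real.exp (t * x) * f x) μ) :
    0 ∈ interior (integrableExpSet id (μ.withDensity fun x ↦ ENNReal.ofReal (f x))) := by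
  have hf : AEMeasurable f μ := by simpa using hexp.self_of_nhds.aemeasurable
  rw [mem_interior_iff_mem_nhds]
  filter_upwards [hexp] with t ht
  refine (integrable_withDensity_iff_integrable_smul₀' hf.ennreal_ofReal (by simp)).2 ?_
  refine ht.mono (by fun_prop) (.of_forall fun x ↦ ?_)
  simp only [ENNReal.toReal_ofReal', smul_eq_mul, norm_mul, id, mul_comm (Real.exp _)]
  gcongr
  simpa [abs_of_nonneg] using le_abs_self (f x)

lemma integral_pow_withDensity_ofReal_sub_neg
    (hexp : ∀ᶠ t in 𝓝 0, Integrable (fun x ↦ Real.exp (t * x) * f x) μ) (n : ℕ) :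
    ∫ x, x ^ n ∂μ.withDensity (fun x ↦ ENNReal.ofReal (f x))
      - ∫ x, x ^ n ∂μ.withDensity (fun x ↦ ENNReal.ofReal (-f x)) = ∫ x, x ^ n * f x ∂μ := by
  have hf : AEMeasurable f μ := by simpa using hexp.self_of_nhds.aemeasurable
  have hpos := integrable_pow_of_mem_interior_integrableExpSet
    (zero_mem_interior_integrableExpSet_withDensity_ofReal hexp) n
  have hneg := integrable_pow_of_mem_interior_integrableExpSet
    (zero_mem_interior_integrableExpSet_withDensity_ofReal (f := -f) (by simpa using hexp)) n
  simp only [id, Pi.neg_apply] at hpos hneg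
  rw [integrable_withDensity_iff_integrable_smul₀' (by fun_prop) (by simp)] at hpos hneg
  rw [integral_withDensity_eq_integral_toReal_smul₀ (by fun_prop) (by simp),
    integral_withDensity_eq_integral_toReal_smul₀ (by fun_prop) (by simp),
    ← integral_sub hpos hneg]
  congr with x
  simp only [ENNReal.toReal_ofReal', smul_eq_mul, ← sub_mul, max_zero_sub_max_neg_zero_eq_self,
    mul_comm (f x)]

theorem ae_eq_zero_of_forall_integral_pow_mul_eq_zero
    (hexp : ∀ᶠ t in 𝓝 0, Integrable (fun x ↦ Real.exp (t * x) * f x) μ)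
    (hmoment : ∀ n : ℕ, ∫ x, x ^ n * f x ∂μ = 0) : f =ᵐ[μ] 0 := by
  have hf : Integrable f μ := by simpa using hexp.self_of_nhds
  have := isFiniteMeasure_withDensity_ofReal hf.2
  have := isFiniteMeasure_withDensity_ofReal hf.neg.2
  have heq : μ.withDensity (fun x ↦ ENNReal.ofReal (f x))
      = μ.withDensity (fun x ↦ ENNReal.ofReal (-f x)) :=
    measure_eq_of_forall_integral_pow_eq
      (zero_mem_interior_integrableExpSet_withDensity_ofReal hexp)
      (zero_mem_interior_integrableExpSet_withDensity_ofReal (f := -f) (by simpa using hexp))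
      fun n ↦ sub_eq_zero.1 ((integral_pow_withDensity_ofReal_sub_neg hexp n).trans (hmoment n))
  rw [withDensity_eq_iff (by fun_prop) (by fun_prop) hf.lintegral_lt_top.ne] at heq
  filter_upwards [heq] with x hx
  have := congrArg ENNReal.toReal hx
  simp only [ENNReal.toReal_ofReal'] at this
  simpa [this] using (max_zero_sub_max_neg_zero_eq_self (f x)).symm

end MomentProblem

section PolynomialsInL2

variable {μ : Measure ℝ}

lemma integrable_polynomial_eval (hμ : 0 ∈ interior (integrableExpSet id μ)) (p : ℝ[X]) :
    Integrable (fun t ↦ p.eval t) μ := by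
  simp only [eval_eq_sum_range]
  exact integrable_finsetSum _ fun n _ ↦
    (integrable_pow_of_mem_interior_integrableExpSet hμ n).const_mul _

lemma memLp_two_polynomial_eval (hμ : 0 ∈ interior (integrableExpSet id μ)) (p : ℝ[X]) :
    MemLp (fun t ↦ p.eval t) 2 μ := by
  rw [memLp_two_iff_integrable_sq (by fun_prop)]
  exact (integrable_polynomial_eval hμ (p ^ 2)).congr (.of_forall fun t ↦ eval_pow 2)

lemma eventually_integrable_exp_mul_of_memLp_two (hμ : 0 ∈ interior (integrableExpSet id μ))
    {f : ℝ → ℝ} (hf : MemLp f 2 μ) :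
    ∀ᶠ t in 𝓝 0, Integrable (fun x ↦ Real.exp (t * x) * f x) μ := by
  have hdouble : Tendsto (fun t : ℝ ↦ 2 * t) (𝓝 0) (𝓝 0) :=
    (continuous_const_mul (2 : ℝ)).tendsto' 0 0 (mul_zero 2)
  filter_upwards [hdouble.eventually (mem_interior_iff_mem_nhds.1 hμ)] with t ht
  have hexp : MemLp (fun x ↦ Real.exp (t * x)) 2 μ := by
    rw [memLp_two_iff_integrable_sq (by fun_prop)]
    refine Integrable.congr ht (.of_forall fun x ↦ ?_)
    simp only [id, ← Real.exp_nat_mul, Nat.cast_ofNat, mul_assoc]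
  exact hexp.integrable_mul hf

/-- A real polynomial as an element of `L²(μ)`, for a measure `μ` with exponential moments. -/
def polynomialToL2 (hμ : 0 ∈ interior (integrableExpSet id μ)) : ℝ[X] →ₗ[ℝ] Lp ℝ 2 μ where
  toFun p := (memLp_two_polynomial_eval hμ p).toLp
  map_add' p q := by
    simp only [eval_add]
    exact MemLp.toLp_add _ _
  map_smul' c p := by
    simp only [eval_smul]
    exact MemLp.toLp_const_smul c (memLp_two_polynomial_eval hμ p)

variable (hμ : 0 ∈ interior (integrableExpSet id μ))

lemma coeFn_polynomialToL2 (p : ℝ[X]) : polynomialToL2 hμ p =ᵐ[μ] fun t ↦ p.eval t :=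
  (memLp_two_polynomial_eval hμ p).coeFn_toLp

lemma inner_polynomialToL2_left (p : ℝ[X]) (f : Lp ℝ 2 μ) :
    inner ℝ (polynomialToL2 hμ p) f = ∫ t, p.eval t * f t ∂μ := by
  rw [L2.inner_def]
  refine integral_congr_ae ?_
  filter_upwards [coeFn_polynomialToL2 hμ p] with t hp
  simp [hp, mul_comm]

lemma inner_polynomialToL2_polynomialToL2 (p q : ℝ[X]) :
    inner ℝ (polynomialToL2 hμ p) (polynomialToL2 hμ q) = ∫ t, (p * q).eval t ∂μ := by
  rw [inner_polynomialToL2_left]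
  refine integral_congr_ae ?_
  filter_upwards [coeFn_polynomialToL2 hμ q] with t hq
  rw [hq, eval_mul]

theorem orthogonal_range_polynomialToL2 : (LinearMap.range (polynomialToL2 hμ))ᗮ = ⊥ := by
  refine (Submodule.eq_bot_iff _).2 fun f hf ↦ (Lp.eq_zero_iff_ae_eq_zero).2 ?_
  refine ae_eq_zero_of_forall_integral_pow_mul_eq_zero
    (eventually_integrable_exp_mul_of_memLp_two hμ (Lp.memLp f)) fun n ↦ ?_
  simpa [inner_polynomialToL2_left] using hf _ (LinearMap.mem_range_self _ (X ^ n))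

theorem orthogonal_span_polynomialToL2_sequence (S : Polynomial.Sequence ℝ) :
    (Submodule.span ℝ (Set.range fun n ↦ polynomialToL2 hμ (S n)))ᗮ = ⊥ := by
  have hspan : Submodule.span ℝ (Set.range S) = ⊤ :=
    S.span fun n ↦ (leadingCoeff_ne_zero.2 (S.ne_zero n)).isUnit
  rw [Set.range_comp' (polynomialToL2 hμ) S, Submodule.span_image, hspan, Submodule.map_top,
    orthogonal_range_polynomialToL2]

end PolynomialsInL2

section GaussianIntegrationByParts

open scoped NNReal

lemma hasDerivAt_gaussianPDFReal (m : ℝ) (v : ℝ≥0) (x : ℝ) :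
    HasDerivAt (gaussianPDFReal m v) (-((x - m) / v) * gaussianPDFReal m v x) x := by
  have hexponent : HasDerivAt (fun x : ℝ ↦ -(x - m) ^ 2 / (2 * v)) (-((x - m) / v)) x := by
    refine (((hasDerivAt_id x).sub_const m).pow 2).neg.div_const (2 * (v : ℝ)) |>.congr_deriv ?_
    simp only [id, Nat.cast_ofNat, mul_one, pow_one, Nat.add_one_sub_one]
    rw [neg_div, mul_div_mul_left _ _ two_ne_zero]
  convert! hexponent.exp.const_mul (√(2 * Real.pi * v))⁻¹ using 1
  rw [gaussianPDFReal]
  ring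

lemma integrable_gaussianReal_iff {m : ℝ} {v : ℝ≥0} (hv : v ≠ 0) {f : ℝ → ℝ} :
    Integrable f (gaussianReal m v) ↔ Integrable fun x ↦ gaussianPDFReal m v x * f x := by
  rw [gaussianReal_of_var_ne_zero m hv, integrable_withDensity_iff_integrable_smul₀'
    (measurable_gaussianPDF m v).aemeasurable (.of_forall fun _ ↦ gaussianPDF_lt_top)]
  simp only [toReal_gaussianPDF, smul_eq_mul]

lemma setIntegral_gaussianReal_eq_setIntegral_smul {E : Type*} [NormedAddCommGroup E]
    [NormedSpace ℝ E] {m : ℝ} {v : ℝ≥0} (hv : v ≠ 0) {f : ℝ → E} {A : Set ℝ}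
    (hA : MeasurableSet A) :
    ∫ x in A, f x ∂gaussianReal m v = ∫ x in A, gaussianPDFReal m v x • f x := by
  rw [gaussianReal_of_var_ne_zero m hv, setIntegral_withDensity_eq_setIntegral_toReal_smul
    (measurable_gaussianPDF m v) (.of_forall fun _ ↦ gaussianPDF_lt_top) f hA]
  simp only [toReal_gaussianPDF]

theorem integral_sub_mul_gaussianReal {m : ℝ} {v : ℝ≥0} {f f' : ℝ → ℝ}
    (hderiv : ∀ x, HasDerivAt f (f' x) x) (hf : Integrable f (gaussianReal m v))
    (hf' : Integrable f' (gaussianReal m v))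
    (hxf : Integrable (fun x ↦ (x - m) * f x) (gaussianReal m v)) :
    ∫ x, (x - m) * f x ∂gaussianReal m v = v * ∫ x, f' x ∂gaussianReal m v := by
  rcases eq_or_ne v 0 with rfl | hv
  · simp
  have hv' : (v : ℝ) ≠ 0 := by exact_mod_cast hv
  let g (x : ℝ) := v * f' x - (x - m) * f x
  have hg : Integrable g (gaussianReal m v) := (hf'.const_mul _).sub hxf
  have hprod (x : ℝ) : HasDerivAt (fun x ↦ v * (gaussianPDFReal m v x * f x))
      (gaussianPDFReal m v x * g x) x := by
    refine (((hasDerivAt_gaussianPDFReal m v x).mul (hderiv x)).const_mul (v : ℝ)).congr_deriv ?_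
    simp only [g]
    field_simp
    ring
  have hzero : ∫ x, g x ∂gaussianReal m v = 0 := by
    rw [integral_gaussianReal_eq_integral_smul hv]
    exact integral_eq_zero_of_hasDerivAt_of_integrable hprod ((integrable_gaussianReal_iff hv).1 hg)
      (((integrable_gaussianReal_iff hv).1 hf).const_mul _)
  rw [integral_sub (hf'.const_mul _) hxf, integral_const_mul, sub_eq_zero] at hzero
  exact hzero.symm

lemma zero_mem_interior_integrableExpSet_gaussianReal (m : ℝ) (v : ℝ≥0) :
    0 ∈ interior (integrableExpSet id (gaussianReal m v)) := by
  simp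

end GaussianIntegrationByParts

section HermiteBasis

lemma iterate_derivative_natDegree {R : Type*} [Semiring R] (p : R[X]) :
    derivative^[p.natDegree] p = C (p.natDegree ! • p.leadingCoeff) := by
  have hdegree : (derivative^[p.natDegree] p).natDegree ≤ 0 := by
    simpa using natDegree_iterate_derivative p p.natDegree
  rw [eq_C_of_natDegree_le_zero hdegree, coeff_iterate_derivative, zero_add,
    Nat.descFactorial_self, coeff_natDegree]

/-- The probabilists' Hermite polynomial `Heₙ` with real coefficients. -/
def realHermite (n : ℕ) : ℝ[X] := (hermite n).map (Int.castRingHom ℝ)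

lemma eval_realHermite (n : ℕ) (t : ℝ) : (realHermite n).eval t = aeval t (hermite n) :=
  eval_map_algebraMap _ _

lemma realHermite_zero : realHermite 0 = 1 := by
  simp [realHermite]

lemma realHermite_succ (n : ℕ) :
    realHermite (n + 1) = X * realHermite n - derivative (realHermite n) := by
  simp [realHermite, hermite_succ, derivative_map]

lemma realHermite_monic (n : ℕ) : (realHermite n).Monic :=
  (hermite_monic n).map _

lemma natDegree_realHermite (n : ℕ) : (realHermite n).natDegree = n := by
  rw [realHermite, (hermite_monic n).natDegree_map, natDegree_hermite]

lemma integrable_polynomial_eval_gaussianReal (p : ℝ[X]) :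
    Integrable (fun t ↦ p.eval t) (gaussianReal 0 1) :=
  integrable_polynomial_eval (zero_mem_interior_integrableExpSet_gaussianReal 0 1) p

lemma integral_X_mul_gaussianReal (p : ℝ[X]) :
    ∫ t, (X * p).eval t ∂gaussianReal 0 1 = ∫ t, (derivative p).eval t ∂gaussianReal 0 1 := by
  simpa using integral_sub_mul_gaussianReal (m := 0) (v := 1) p.hasDerivAt
    (integrable_polynomial_eval_gaussianReal p)
    (integrable_polynomial_eval_gaussianReal (derivative p))
    ((integrable_polynomial_eval_gaussianReal (X * p)).congr (.of_forall fun t ↦ by simp))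

lemma integral_mul_X_mul_sub_derivative_gaussianReal (p q : ℝ[X]) :
    ∫ t, (p * (X * q - derivative q)).eval t ∂gaussianReal 0 1
      = ∫ t, (derivative p * q).eval t ∂gaussianReal 0 1 := by
  have hsplit : p * (X * q - derivative q) = X * (p * q) - p * derivative q := by ring
  simp only [hsplit, eval_sub]
  rw [integral_sub (integrable_polynomial_eval_gaussianReal _)
      (integrable_polynomial_eval_gaussianReal _), integral_X_mul_gaussianReal,
    ← integral_sub (integrable_polynomial_eval_gaussianReal _)
      (integrable_polynomial_eval_gaussianReal _)]
  simp only [derivative_mul, eval_add, add_sub_cancel_right]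

lemma integral_mul_realHermite_gaussianReal (p : ℝ[X]) (n : ℕ) :
    ∫ t, (p * realHermite n).eval t ∂gaussianReal 0 1
      = ∫ t, (derivative^[n] p).eval t ∂gaussianReal 0 1 := by
  induction n generalizing p with
  | zero => simp [realHermite_zero]
  | succ n ih =>
    rw [realHermite_succ, integral_mul_X_mul_sub_derivative_gaussianReal, ih,
      Function.iterate_succ_apply]

theorem integral_realHermite_mul_realHermite_of_lt {m n : ℕ} (hmn : m < n) :
    ∫ t, (realHermite m * realHermite n).eval t ∂gaussianReal 0 1 = 0 := by
  rw [integral_mul_realHermite_gaussianReal,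
    iterate_derivative_eq_zero (by rwa [natDegree_realHermite])]
  simp

theorem integral_realHermite_mul_self (n : ℕ) :
    ∫ t, (realHermite n * realHermite n).eval t ∂gaussianReal 0 1 = n ! := by
  have hderiv := iterate_derivative_natDegree (realHermite n)
  rw [natDegree_realHermite, (realHermite_monic n).leadingCoeff, nsmul_one] at hderiv
  rw [integral_mul_realHermite_gaussianReal, hderiv]
  simp

theorem integral_realHermite_mul_realHermite (m n : ℕ) :
    ∫ t, (realHermite m * realHermite n).eval t ∂gaussianReal 0 1
      = if m = n then (n ! : ℝ) else 0 := by
  rcases lt_trichotomy m n with hlt | rfl | hgt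
  · rw [if_neg hlt.ne, integral_realHermite_mul_realHermite_of_lt hlt]
  · rw [if_pos rfl, integral_realHermite_mul_self]
  · rw [if_neg hgt.ne', mul_comm, integral_realHermite_mul_realHermite_of_lt hgt]

/-- The Hermite polynomials `Heₙ / √n!`, normalized to have norm `1` in `L²` of the standard
Gaussian measure. -/
def normalizedHermite : Polynomial.Sequence ℝ where
  elems' n := C (√(n ! : ℝ))⁻¹ * realHermite n
  degree_eq' n := by
    rw [degree_C_mul (by positivity), degree_eq_natDegree (realHermite_monic n).ne_zero,
      natDegree_realHermite]

lemma normalizedHermite_apply (n : ℕ) :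
    normalizedHermite n = C (√(n ! : ℝ))⁻¹ * realHermite n := rfl

theorem orthonormal_normalizedHermite :
    Orthonormal ℝ fun n ↦ polynomialToL2 (zero_mem_interior_integrableExpSet_gaussianReal 0 1)
      (normalizedHermite n) := by
  rw [orthonormal_iff_ite]
  intro m n
  have hscale : normalizedHermite m * normalizedHermite n
      = C ((√(m ! : ℝ))⁻¹ * (√(n ! : ℝ))⁻¹) * (realHermite m * realHermite n) := by
    rw [normalizedHermite_apply, normalizedHermite_apply, C_mul]
    ring
  rw [inner_polynomialToL2_polynomialToL2, hscale]
  simp only [eval_C_mul, integral_const_mul, integral_realHermite_mul_realHermite]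
  split_ifs with hmn
  · subst hmn
    rw [← mul_inv, Real.mul_self_sqrt (by positivity), inv_mul_cancel₀ (by positivity)]
  · rw [mul_zero]

/-- The normalized Hermite polynomials as a Hilbert basis of `L²` of the standard Gaussian
measure. -/
def hermiteBasis : HilbertBasis ℕ ℝ (Lp ℝ 2 (gaussianReal 0 1)) :=
  HilbertBasis.mkOfOrthogonalEqBot orthonormal_normalizedHermite
    (orthogonal_span_polynomialToL2_sequence _ normalizedHermite)

lemma coeFn_hermiteBasis (n : ℕ) :
    hermiteBasis n =ᵐ[gaussianReal 0 1] fun t ↦ (normalizedHermite n).eval t := by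
  rw [hermiteBasis, HilbertBasis.coe_mkOfOrthogonalEqBot]
  exact coeFn_polynomialToL2 _ _

end HermiteBasis

section ProjectionKernel

theorem hasSum_setIntegral_inner_mul_setIntegral_inner {α ι 𝕜 E : Type*} [MeasurableSpace α]
    {μ : Measure α} [RCLike 𝕜] [NormedAddCommGroup E] [InnerProductSpace 𝕜 E]
    (b : HilbertBasis ι 𝕜 (Lp E 2 μ)) {A : Set α} (hA : MeasurableSet A) (f g : Lp E 2 μ) :
    HasSum (fun i ↦ (∫ a in A, inner 𝕜 (f a) (b i a) ∂μ) * ∫ a in A, inner 𝕜 (b i a) (g a) ∂μ)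
      (∫ a in A, inner 𝕜 (f a) (g a) ∂μ) := by
  let cut (h : Lp E 2 μ) : Lp E 2 μ := ((Lp.memLp h).indicator hA).toLp
  have coeFn_cut (h : Lp E 2 μ) : cut h =ᵐ[μ] A.indicator h := MemLp.coeFn_toLp _
  have inner_cut_left (h k : Lp E 2 μ) :
      inner 𝕜 (cut h) k = ∫ a in A, inner 𝕜 (h a) (k a) ∂μ := by
    rw [L2.inner_def, ← integral_indicator hA]
    refine integral_congr_ae ?_
    filter_upwards [coeFn_cut h] with a ha
    by_cases haA : a ∈ A <;> simp [ha, haA]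
  have inner_cut_right (h k : Lp E 2 μ) :
      inner 𝕜 h (cut k) = ∫ a in A, inner 𝕜 (h a) (k a) ∂μ := by
    rw [L2.inner_def, ← integral_indicator hA]
    refine integral_congr_ae ?_
    filter_upwards [coeFn_cut k] with a ha
    by_cases haA : a ∈ A <;> simp [ha, haA]
  have inner_cut_cut : inner 𝕜 (cut f) (cut g) = ∫ a in A, inner 𝕜 (f a) (g a) ∂μ := by
    rw [inner_cut_left]
    refine setIntegral_congr_ae hA ?_
    filter_upwards [coeFn_cut g] with a ha haA
    simp [ha, haA]
  rw [← inner_cut_cut]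
  simpa only [inner_cut_left, inner_cut_right] using b.hasSum_inner_mul_inner (cut f) (cut g)

theorem mem_Icc_of_hasSum_mul_self {ι : Type*} {a : ι → ℝ} {i : ι}
    (h : HasSum (fun j ↦ a j * a j) (a i)) : a i ∈ Set.Icc 0 1 := by
  have hle : a i * a i ≤ a i := le_hasSum h i fun j _ ↦ mul_self_nonneg (a j)
  have hnonneg : 0 ≤ a i := h.nonneg fun j ↦ mul_self_nonneg (a j)
  exact ⟨hnonneg, by nlinarith⟩

end ProjectionKernel

namespace discreteHermiteKernel

lemma eq_setIntegral_inner_hermiteBasis (s : ℝ) (x y : ℕ) :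
    discreteHermiteKernel s x y
      = ∫ t in Set.Ioi s, inner ℝ (hermiteBasis x t) (hermiteBasis y t) ∂gaussianReal 0 1 := by
  have hbasis (n : ℕ) (t : ℝ) :
      (normalizedHermite n).eval t = (√(n ! : ℝ))⁻¹ * aeval t (hermite n) := by
    rw [normalizedHermite_apply, eval_C_mul, eval_realHermite]
  have hinner : ∫ t in Set.Ioi s, inner ℝ (hermiteBasis x t) (hermiteBasis y t) ∂gaussianReal 0 1
      = ∫ t in Set.Ioi s, (normalizedHermite x).eval t * (normalizedHermite y).eval t
          ∂gaussianReal 0 1 := by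
    refine setIntegral_congr_ae measurableSet_Ioi ?_
    filter_upwards [coeFn_hermiteBasis x, coeFn_hermiteBasis y] with t hx hy _
    rw [hx, hy, Real.inner_apply]
  rw [hinner, setIntegral_gaussianReal_eq_setIntegral_smul one_ne_zero measurableSet_Ioi,
    discreteHermiteKernel, ← integral_const_mul]
  congr with t
  rw [gaussianPDFReal, hbasis, hbasis, Real.sqrt_mul (by positivity), Real.sqrt_mul (by positivity)]
  simp only [smul_eq_mul, NNReal.coe_one, mul_one, sub_zero, mul_inv]
  ring

protected theorem comm (s : ℝ) (x y : ℕ) :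
    discreteHermiteKernel s x y = discreteHermiteKernel s y x := by
  simp only [eq_setIntegral_inner_hermiteBasis, real_inner_comm]

theorem hasSum_mul (s : ℝ) (x y : ℕ) :
    HasSum (fun z ↦ discreteHermiteKernel s x z * discreteHermiteKernel s z y)
      (discreteHermiteKernel s x y) := by
  simp only [eq_setIntegral_inner_hermiteBasis]
  exact hasSum_setIntegral_inner_mul_setIntegral_inner hermiteBasis measurableSet_Ioi _ _

theorem self_mem_Icc (s : ℝ) (x : ℕ) : discreteHermiteKernel s x x ∈ Set.Icc 0 1 := by
  have hsum := hasSum_mul s x x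
  simp only [discreteHermiteKernel.comm s _ x] at hsum
  exact mem_Icc_of_hasSum_mul_self hsum

end discreteHermiteKernel

/-- For every `s ∈ ℝ` the discrete Hermite kernel is an orthogonal projection kernel on `ℕ`:
it is symmetric, the series `Σ_z K_s(x,z)·K_s(z,y)` converges absolutely to `K_s(x,y)`,
and `0 ≤ K_s(x,x) ≤ 1`. -/
theorem discreteHermiteKernel_isProjectionKernel (s : ℝ) :
    (∀ x y : ℕ, discreteHermiteKernel s x y = discreteHermiteKernel s y x)
    ∧ (∀ x y : ℕ, Summable (fun z : ℕ => |discreteHermiteKernel s x z * discreteHermiteKernel s z y|)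
        ∧ ∑' z : ℕ, discreteHermiteKernel s x z * discreteHermiteKernel s z y
            = discreteHermiteKernel s x y)
    ∧ (∀ x : ℕ, 0 ≤ discreteHermiteKernel s x x ∧ discreteHermiteKernel s x x ≤ 1) := by
  refine ⟨discreteHermiteKernel.comm s, fun x y ↦ ?_, discreteHermiteKernel.self_mem_Icc s⟩
  have hsum := discreteHermiteKernel.hasSum_mul s x y
  exact ⟨hsum.summable.abs, hsum.tsum_eq⟩

end
end

section
/- Fix s ∈ ℝ, k ≥ 1, distinct points y_1, …, y_k ∈ ℕ, and let θ : ℕ → (0, ∞) satisfy (θ(N) − N)/√N → s as N → ∞. Then the k×k determinants of the Charlier kernel converge to the corresponding determinant of the discrete Hermite kernel: lim_{N→∞} det[ K^{ch}_{N,θ(N)}(y_i, y_j) ]_{1≤i,j≤k} = det[ K_s(y_i, y_j) ]_{1≤i,j≤k}. -/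
open Filter
open scoped Nat Topology

noncomputable section

/-- The Charlier polynomial of degree `m` with parameter `θ`, evaluated at `x ∈ ℕ`:
`C_m(x;θ) = Σ_{k=0}^m (−1)^k·(m choose k)·(x choose k)·k!·θ^{−k}`. -/
def charlier (θ : ℝ) (m x : ℕ) : ℝ :=
  ∑ k ∈ Finset.range (m + 1),
    (-1 : ℝ) ^ k * (m.choose k : ℝ) * (x.choose k : ℝ) * (k ! : ℝ) / θ ^ k

/-- The normalized Charlier function
`C̃_m(x;θ) = e^{−θ/2}·θ^{(x+m)/2}·(x!·m!)^{−1/2}·C_m(x;θ)`. -/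
def normalizedCharlier (θ : ℝ) (m x : ℕ) : ℝ :=
  Real.exp (-θ / 2) * Real.sqrt (θ ^ (x + m)) / Real.sqrt ((x ! : ℝ) * (m ! : ℝ)) *
    charlier θ m x

/-- The Charlier kernel `K^{ch}_{N,θ}(x,y) = Σ_{m=0}^{N−1} C̃_m(x;θ)·C̃_m(y;θ)`. -/
def charlierKernel (N : ℕ) (θ : ℝ) (x y : ℕ) : ℝ :=
  ∑ m ∈ Finset.range N, normalizedCharlier θ m x * normalizedCharlier θ m y

/-!
Strip the factor `(x! y!)^{-1/2}` from both kernels. Summation by parts in the Charlier kernel and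
integration by parts in the Hermite kernel then give recurrences in `(x, y)` of the same shape,
`K(x + 1, y) = (boundary term) + y K(x, y - 1)`, so it suffices to compare the boundary terms and
the value at `(0, 0)`. The polynomial factors of the boundary terms converge because the three-term
recurrence of `θ^{x/2} C_m(x;θ)` in `x` tends to that of the Hermite polynomials, and the Poisson
weight `√θ e^{-θ} θ^N / N!` converges to the Gaussian density at `s` by Stirling's formula. At
`(0, 0)` the Charlier kernel is the probability that a Poisson variable of mean `θ` is less than
`N`, which the central limit theorem identifies with the Gaussian mass of `(s, ∞)`.
-/

section CharlierRecurrences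

lemma charlier_eq_sum_range_of_le (θ : ℝ) {m M : ℕ} (hmM : m ≤ M) (x : ℕ) :
    charlier θ m x = ∑ k ∈ Finset.range (M + 1),
      (-1 : ℝ) ^ k * (m.choose k : ℝ) * (x.choose k : ℝ) * (k ! : ℝ) / θ ^ k := by
  refine Finset.sum_subset (Finset.range_subset_range.2 (by lia)) fun k _ hk ↦ ?_
  simp [Nat.choose_eq_zero_of_lt (show m < k by simpa using hk)]

lemma charlier_comm (θ : ℝ) (m x : ℕ) : charlier θ m x = charlier θ x m := by
  rw [charlier_eq_sum_range_of_le θ (le_max_left m x),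
    charlier_eq_sum_range_of_le θ (le_max_right m x)]
  exact Finset.sum_congr rfl fun k _ ↦ by ring

lemma charlier_zero_left (θ : ℝ) (x : ℕ) : charlier θ 0 x = 1 := by simp [charlier]

lemma charlier_zero_right (θ : ℝ) (m : ℕ) : charlier θ m 0 = 1 := by
  rw [charlier_comm, charlier_zero_left]

lemma choose_succ_mul_factorial_succ (x k : ℕ) :
    x.choose (k + 1) * (k + 1)! = x * ((x - 1).choose k * k !) := by
  cases x with
  | zero => simp
  | succ x =>
    rw [Nat.factorial_succ, ← mul_assoc, ← Nat.add_one_mul_choose_eq, Nat.add_sub_cancel, mul_assoc]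

/- Here and in the recurrences below, the value of a truncated `x - 1` at `x = 0` is irrelevant: it
comes with a coefficient `x`. -/
lemma charlier_succ_left (θ : ℝ) (m x : ℕ) :
    charlier θ (m + 1) x = charlier θ m x - x / θ * charlier θ m (x - 1) := by
  rw [charlier_eq_sum_range_of_le θ m.le_succ x, charlier, charlier,
    Finset.sum_range_succ' _ (m + 1), Finset.sum_range_succ' _ (m + 1), Finset.mul_sum,
    add_sub_right_comm, ← Finset.sum_sub_distrib]
  congr 1
  · refine Finset.sum_congr rfl fun k _ ↦ ?_
    have hx : (x.choose (k + 1) : ℝ) * (k + 1)! = x * ((x - 1).choose k * k !) :=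
      mod_cast choose_succ_mul_factorial_succ x k
    simp only [mul_assoc, hx, Nat.choose_succ_succ, Nat.cast_add]
    ring
  · simp

lemma charlier_succ_right (θ : ℝ) (m x : ℕ) :
    charlier θ m (x + 1) = charlier θ m x - m / θ * charlier θ (m - 1) x := by
  rw [charlier_comm, charlier_succ_left, charlier_comm, charlier_comm θ x]

end CharlierRecurrences

section ScaledCharlier

/-- The mass `e^{−θ} θ^m / m!` that the Poisson law of mean `θ` gives to `m`; the Charlier
polynomials are orthogonal for this weight. The mean is a real number so
that no nonnegativity proof enters the recurrences. -/
def poissonWeight (θ : ℝ) (m : ℕ) : ℝ := Real.exp (-θ) * θ ^ m / (m ! : ℝ)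

/-- The Charlier polynomial `θ^{x/2} C_m(x;θ)`, in the scaling in which it converges to the Hermite
polynomial `He_x`. -/
def scaledCharlier (θ : ℝ) (m x : ℕ) : ℝ := √θ ^ x * charlier θ m x

/-- The Charlier kernel without its factor `(x! y!)^{−1/2}`. -/
def scaledCharlierKernel (N : ℕ) (θ : ℝ) (x y : ℕ) : ℝ :=
  ∑ m ∈ Finset.range N, poissonWeight θ m * scaledCharlier θ m x * scaledCharlier θ m y

variable {θ : ℝ}

lemma succ_mul_poissonWeight_succ (θ : ℝ) (m : ℕ) :
    (m + 1) * poissonWeight θ (m + 1) = θ * poissonWeight θ m := by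
  rw [poissonWeight, poissonWeight, Nat.factorial_succ]
  push_cast
  field

lemma normalizedCharlier_mul_normalizedCharlier (hθ : 0 ≤ θ) (m x y : ℕ) :
    normalizedCharlier θ m x * normalizedCharlier θ m y =
      (√(x ! * y !))⁻¹ * (poissonWeight θ m * scaledCharlier θ m x * scaledCharlier θ m y) := by
  have hexp : Real.exp (-θ) = Real.exp (-θ / 2) ^ 2 := by
    rw [← Real.exp_nat_mul]
    ring_nf
  have hpow (n : ℕ) : √(θ ^ n) = √θ ^ n := by
    rw [Real.sqrt_eq_iff_eq_sq (by positivity) (by positivity), pow_right_comm, Real.sq_sqrt hθ]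
  have hθm : θ ^ m = (√θ ^ m) ^ 2 := by rw [pow_right_comm, Real.sq_sqrt hθ]
  have hm : (m ! : ℝ) = √(m !) ^ 2 := (Real.sq_sqrt (by positivity)).symm
  simp only [normalizedCharlier, poissonWeight, scaledCharlier, hpow, hexp, hθm,
    Real.sqrt_mul (Nat.cast_nonneg _)]
  nth_rw 3 [hm]
  field

lemma charlierKernel_eq_scaledCharlierKernel (hθ : 0 ≤ θ) (N x y : ℕ) :
    charlierKernel N θ x y = (√(x ! * y !))⁻¹ * scaledCharlierKernel N θ x y := by
  simp_rw [charlierKernel, scaledCharlierKernel, Finset.mul_sum,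
    normalizedCharlier_mul_normalizedCharlier hθ]

lemma scaledCharlierKernel_comm (N : ℕ) (θ : ℝ) (x y : ℕ) :
    scaledCharlierKernel N θ x y = scaledCharlierKernel N θ y x :=
  Finset.sum_congr rfl fun _ _ ↦ mul_right_comm _ _ _

lemma scaledCharlierKernel_succ (N : ℕ) (θ : ℝ) (x y : ℕ) :
    scaledCharlierKernel (N + 1) θ x y = scaledCharlierKernel N θ x y +
      poissonWeight θ N * scaledCharlier θ N x * scaledCharlier θ N y :=
  Finset.sum_range_succ _ _

lemma scaledCharlier_zero_left (θ : ℝ) (x : ℕ) : scaledCharlier θ 0 x = √θ ^ x := by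
  rw [scaledCharlier, charlier_zero_left, mul_one]

lemma scaledCharlier_zero_right (θ : ℝ) (m : ℕ) : scaledCharlier θ m 0 = 1 := by
  rw [scaledCharlier, charlier_zero_right, pow_zero, mul_one]

lemma scaledCharlier_succ_left (hθ : 0 < θ) (m x : ℕ) :
    scaledCharlier θ (m + 1) x =
      scaledCharlier θ m x - x / √θ * scaledCharlier θ m (x - 1) := by
  have hsq : √θ ^ 2 = θ := Real.sq_sqrt hθ.le
  cases x with
  | zero => simp [scaledCharlier_zero_right]
  | succ x =>
    simp only [scaledCharlier, charlier_succ_left θ m, Nat.add_sub_cancel]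
    field_simp
    linear_combination -((x + 1 : ℕ) * charlier θ m x * √θ ^ x) * hsq

lemma scaledCharlier_sub_succ_div_sqrt (hθ : 0 < θ) (m x : ℕ) :
    scaledCharlier θ m x - scaledCharlier θ m (x + 1) / √θ =
      m / θ * scaledCharlier θ (m - 1) x := by
  simp only [scaledCharlier, charlier_succ_right θ m]
  field_simp
  ring

lemma scaledCharlier_succ_right (hθ : 0 < θ) (m x : ℕ) :
    scaledCharlier θ m (x + 1) =
      (x / √θ + (θ - m) / √θ) * scaledCharlier θ m x - x * scaledCharlier θ m (x - 1) := by
  have hsq : √θ ^ 2 = θ := Real.sq_sqrt hθ.le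
  have hleft : (m : ℝ) * scaledCharlier θ (m - 1) x =
      m * (scaledCharlier θ m x + x / √θ * scaledCharlier θ (m - 1) (x - 1)) := by
    cases m with
    | zero => simp
    | succ m => simp [scaledCharlier_succ_left hθ m x]
  have hright : x * (scaledCharlier θ m (x - 1) - scaledCharlier θ m x / √θ) =
      x * (m / θ * scaledCharlier θ (m - 1) (x - 1)) := by
    cases x with
    | zero => simp
    | succ x => rw [Nat.add_sub_cancel, scaledCharlier_sub_succ_div_sqrt hθ]
  have hsucc := scaledCharlier_sub_succ_div_sqrt hθ m x
  field_simp at hleft hright hsucc ⊢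
  refine mul_left_cancel₀ hθ.ne' ?_
  linear_combination -√θ * hsucc - √θ * hleft + hright + (θ - m) * scaledCharlier θ m x * hsq

/- Summation by parts: `√θ (p_m(y) - p_{m+1}(y)) = y p_m(y-1)` for the scaled polynomials `p_m`. The
boundary difference equals `(N/θ) p_{N-1}(x)`, but in this form it makes sense at `N = 0`. -/
lemma scaledCharlierKernel_succ_left (hθ : 0 < θ) (N x y : ℕ) :
    scaledCharlierKernel N θ (x + 1) y =
      √θ * poissonWeight θ N * (scaledCharlier θ N x - scaledCharlier θ N (x + 1) / √θ) *
        scaledCharlier θ N y + y * scaledCharlierKernel N θ x (y - 1) := by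
  have hsqrt : √θ ≠ 0 := by positivity
  induction N with
  | zero => simp [scaledCharlierKernel, scaledCharlier_zero_left, pow_succ, hsqrt]
  | succ N ih =>
    have hdiff : poissonWeight θ (N + 1) *
        (scaledCharlier θ (N + 1) x - scaledCharlier θ (N + 1) (x + 1) / √θ) =
          poissonWeight θ N * scaledCharlier θ N x := by
      rw [scaledCharlier_sub_succ_div_sqrt hθ, Nat.add_sub_cancel]
      have := succ_mul_poissonWeight_succ θ N
      push_cast
      field_simp
      linear_combination scaledCharlier θ N x * this
    rw [scaledCharlierKernel_succ, ih, scaledCharlierKernel_succ, mul_assoc √θ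
      (poissonWeight θ (N + 1)), hdiff, scaledCharlier_succ_left hθ N y]
    field_simp
    ring

end ScaledCharlier

section HermiteIntegrals

open MeasureTheory Polynomial ProbabilityTheory

lemma derivative_hermite (n : ℕ) : derivative (hermite n) = (n : ℤ[X]) * hermite (n - 1) := by
  induction n with
  | zero => simp
  | succ n ih =>
    cases n with
    | zero => simp
    | succ n =>
      rw [hermite_succ (n + 1), ih, Nat.add_sub_cancel, derivative_sub, derivative_mul, ih,
        derivative_X, derivative_mul, derivative_natCast, Nat.add_sub_cancel, Nat.add_sub_cancel,
        hermite_succ n]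
      push_cast
      ring

lemma hermite_succ_eq (n : ℕ) : hermite (n + 1) = X * hermite n - (n : ℤ[X]) * hermite (n - 1) := by
  rw [hermite_succ, derivative_hermite]

lemma gaussianPDFReal_zero_one (t : ℝ) :
    gaussianPDFReal 0 1 t = (√(2 * Real.pi))⁻¹ * Real.exp (-t ^ 2 / 2) := by
  simp [gaussianPDFReal]

lemma hasDerivAt_gaussianPDFReal_zero_one (t : ℝ) :
    HasDerivAt (gaussianPDFReal 0 1) (-t * gaussianPDFReal 0 1 t) t := by
  have hsq : HasDerivAt (fun t : ℝ ↦ -t ^ 2 / 2) (-t) t := by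
    convert! (hasDerivAt_pow 2 t).neg.div_const 2 using 1
    simp only [Nat.cast_ofNat, Nat.add_one_sub_one, pow_one]
    ring
  rw [funext gaussianPDFReal_zero_one]
  convert! hsq.exp.const_mul (√(2 * Real.pi))⁻¹ using 1
  ring

variable {R : Type*} [CommRing R] [Algebra R ℝ]

lemma integrable_gaussianPDFReal_mul_aeval (P : R[X]) :
    Integrable fun t ↦ gaussianPDFReal 0 1 t * aeval t P := by
  induction P using Polynomial.induction_on' with
  | add P Q hP hQ =>
    simp only [map_add, mul_add]
    exact hP.add hQ
  | monomial n a =>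
    have hn : (-1 : ℝ) < n := neg_one_lt_zero.trans_le n.cast_nonneg
    refine ((integrable_rpow_mul_exp_neg_mul_sq one_half_pos hn).const_mul
      ((√(2 * Real.pi))⁻¹ * algebraMap R ℝ a)).congr (.of_forall fun t ↦ ?_)
    simp only [Real.rpow_natCast, gaussianPDFReal_zero_one, aeval_monomial]
    ring_nf

lemma tendsto_gaussianPDFReal_mul_aeval_atTop (P : R[X]) :
    Tendsto (fun t ↦ gaussianPDFReal 0 1 t * aeval t P) atTop (𝓝 0) := by
  induction P using Polynomial.induction_on' with
  | add P Q hP hQ => simpa only [map_add, mul_add, add_zero] using hP.add hQ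
  | monomial n a =>
    have hexp : Tendsto (fun t : ℝ ↦ Real.exp (-(1 / 2) * t)) atTop (𝓝 0) :=
      Real.tendsto_exp_atBot.comp (tendsto_id.const_mul_atTop_of_neg (by norm_num))
    have hpow := ((rpow_mul_exp_neg_mul_sq_isLittleO_exp_neg one_half_pos n).trans_tendsto
      hexp).const_mul ((√(2 * Real.pi))⁻¹ * algebraMap R ℝ a)
    rw [mul_zero] at hpow
    refine hpow.congr fun t ↦ ?_
    simp only [Real.rpow_natCast, gaussianPDFReal_zero_one, aeval_monomial]
    ring_nf

lemma setIntegral_Ioi_gaussianPDFReal_mul_aeval_X_mul_sub_derivative (s : ℝ) (P : R[X]) :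
    ∫ t in Set.Ioi s, gaussianPDFReal 0 1 t * aeval t (X * P - derivative P) =
      gaussianPDFReal 0 1 s * aeval s P := by
  have hderiv (t : ℝ) : HasDerivAt (fun t ↦ -(gaussianPDFReal 0 1 t * aeval t P))
      (gaussianPDFReal 0 1 t * aeval t (X * P - derivative P)) t := by
    convert! ((hasDerivAt_gaussianPDFReal_zero_one t).mul (P.hasDerivAt_aeval t)).neg using 1
    simp only [map_sub, map_mul, aeval_X]
    ring
  have hlim := (tendsto_gaussianPDFReal_mul_aeval_atTop P).neg
  rw [integral_Ioi_of_hasDerivAt_of_tendsto' (fun t _ ↦ hderiv t)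
    (integrable_gaussianPDFReal_mul_aeval _).integrableOn hlim]
  ring

/-- The integral `∫_s^∞ φ He_x He_y` against the standard Gaussian density `φ`: the discrete Hermite
kernel without its factor `(x! y!)^{−1/2}`. -/
def scaledHermiteKernel (s : ℝ) (x y : ℕ) : ℝ :=
  ∫ t in Set.Ioi s, gaussianPDFReal 0 1 t * aeval t (hermite x * hermite y)

lemma scaledHermiteKernel_comm (s : ℝ) (x y : ℕ) :
    scaledHermiteKernel s x y = scaledHermiteKernel s y x := by
  simp_rw [scaledHermiteKernel, mul_comm (hermite x)]

lemma scaledHermiteKernel_zero_zero (s : ℝ) :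
    scaledHermiteKernel s 0 0 = (gaussianReal 0 1).real (Set.Ioi s) := by
  rw [measureReal_def, gaussianReal_apply_eq_integral 0 one_ne_zero, ENNReal.toReal_ofReal
    (integral_nonneg fun t ↦ gaussianPDFReal_nonneg 0 1 t)]
  simp [scaledHermiteKernel]

lemma scaledHermiteKernel_succ_left (s : ℝ) (x y : ℕ) :
    scaledHermiteKernel s (x + 1) y =
      gaussianPDFReal 0 1 s * aeval s (hermite x) * aeval s (hermite y) +
        y * scaledHermiteKernel s x (y - 1) := by
  have hpoly : hermite (x + 1) * hermite y =
      (X * (hermite x * hermite y) - derivative (hermite x * hermite y)) +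
        (y : ℤ[X]) * (hermite x * hermite (y - 1)) := by
    rw [hermite_succ, derivative_mul, derivative_hermite y]
    ring
  have hsplit (t : ℝ) : gaussianPDFReal 0 1 t * aeval t (hermite (x + 1) * hermite y) =
      gaussianPDFReal 0 1 t *
          aeval t (X * (hermite x * hermite y) - derivative (hermite x * hermite y)) +
        y * (gaussianPDFReal 0 1 t * aeval t (hermite x * hermite (y - 1))) := by
    rw [hpoly, map_add, map_mul _ (y : ℤ[X]), map_natCast]
    ring
  simp_rw [scaledHermiteKernel, hsplit]
  rw [integral_add (integrable_gaussianPDFReal_mul_aeval _).integrableOn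
      ((integrable_gaussianPDFReal_mul_aeval _).integrableOn.const_mul _), integral_const_mul,
    setIntegral_Ioi_gaussianPDFReal_mul_aeval_X_mul_sub_derivative, map_mul, mul_assoc]

lemma discreteHermiteKernel_eq_scaledHermiteKernel (s : ℝ) (x y : ℕ) :
    discreteHermiteKernel s x y = (√(x ! * y !))⁻¹ * scaledHermiteKernel s x y := by
  simp_rw [discreteHermiteKernel, scaledHermiteKernel, gaussianPDFReal_zero_one, map_mul, mul_assoc,
    integral_const_mul]
  rw [← mul_assoc 2, Real.sqrt_mul (by positivity), mul_inv]
  ring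

end HermiteIntegrals

section SecondOrderExpansions

open Asymptotics

lemma tendsto_mul_comp_of_sub_sq_isLittleO {ι 𝕜 : Type*} [NormedField 𝕜] {l : Filter ι}
    {f : 𝕜 → 𝕜} {a u : ι → 𝕜} {b c : 𝕜}
    (hf : (fun z ↦ f z - b * z ^ 2) =o[𝓝 0] fun z ↦ z ^ 2) (hu : Tendsto u l (𝓝 0))
    (hau : Tendsto (fun i ↦ a i * u i ^ 2) l (𝓝 c)) :
    Tendsto (fun i ↦ a i * f (u i)) l (𝓝 (b * c)) := by
  have hrem : Tendsto (fun i ↦ a i * (f (u i) - b * u i ^ 2)) l (𝓝 0) :=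
    (((isBigO_refl a l).mul_isLittleO (hf.comp_tendsto hu)).trans_isBigO
      (hau.isBigO_one ℝ)).tendsto_zero_of_tendsto tendsto_const_nhds
  have := hrem.add (hau.const_mul b)
  rw [zero_add] at this
  exact this.congr fun i ↦ by ring

lemma log_one_add_sub_isLittleO_sq :
    (fun u : ℝ ↦ Real.log (1 + u) - u - (-1 / 2) * u ^ 2) =o[𝓝 0] fun u ↦ u ^ 2 := by
  refine IsBigO.trans_isLittleO ?_ (isLittleO_pow_pow (show 2 < 3 by norm_num))
  refine IsBigO.of_bound 2 ?_
  filter_upwards [Metric.ball_mem_nhds (0 : ℝ) one_half_pos] with u hu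
  have hu' : |u| < 1 / 2 := by simpa using hu
  have hbound := Real.abs_log_sub_add_sum_range_le (x := -u) (by rw [abs_neg]; linarith) 2
  have hlog : ∑ i ∈ Finset.range 2, (-u) ^ (i + 1) / ((i : ℝ) + 1) + Real.log (1 - -u) =
      Real.log (1 + u) - u - (-1 / 2) * u ^ 2 := by
    rw [Finset.sum_range_succ, Finset.sum_range_one, sub_neg_eq_add]
    push_cast
    ring
  rw [hlog, abs_neg] at hbound
  calc ‖Real.log (1 + u) - u - (-1 / 2) * u ^ 2‖
      ≤ |u| ^ 3 / (1 - |u|) := hbound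
    _ ≤ |u| ^ 3 / (1 / 2) := by gcongr; linarith
    _ = 2 * ‖u ^ 3‖ := by rw [norm_pow, Real.norm_eq_abs]; ring

lemma exp_sub_one_sub_isLittleO_sq :
    (fun z : ℂ ↦ Complex.exp z - 1 - z - 1 / 2 * z ^ 2) =o[𝓝 0] fun z ↦ z ^ 2 := by
  refine (Complex.exp_sub_sum_range_succ_isLittleO_pow 2).congr_left fun z ↦ ?_
  have hsum : ∑ k ∈ Finset.range (2 + 1), z ^ k / (k ! : ℂ) = 1 + z + 1 / 2 * z ^ 2 := by
    simp [Finset.sum_range_succ, div_eq_inv_mul]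
  rw [hsum]
  ring

end SecondOrderExpansions

section PoissonLimits

open MeasureTheory ProbabilityTheory

variable {θ : ℕ → ℝ} {s : ℝ}

lemma tendsto_sqrt_natCast_atTop : Tendsto (fun N : ℕ ↦ √(N : ℝ)) atTop atTop :=
  Real.tendsto_sqrt_atTop.comp tendsto_natCast_atTop_atTop

lemma tendsto_sub_div_natCast
    (hθ : Tendsto (fun N : ℕ ↦ (θ N - N) / √(N : ℝ)) atTop (𝓝 s)) :
    Tendsto (fun N : ℕ ↦ (θ N - N) / N) atTop (𝓝 0) :=
  (hθ.div_atTop tendsto_sqrt_natCast_atTop).congr fun N ↦ by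
    rw [div_div, Real.mul_self_sqrt N.cast_nonneg]

lemma tendsto_div_natCast
    (hθ : Tendsto (fun N : ℕ ↦ (θ N - N) / √(N : ℝ)) atTop (𝓝 s)) :
    Tendsto (fun N : ℕ ↦ θ N / N) atTop (𝓝 1) := by
  have hone := (tendsto_sub_div_natCast hθ).add_const 1
  rw [zero_add] at hone
  refine hone.congr' ?_
  filter_upwards [eventually_ne_atTop 0] with N hN
  field

lemma tendsto_atTop_of_tendsto_sub_div_sqrt
    (hθ : Tendsto (fun N : ℕ ↦ (θ N - N) / √(N : ℝ)) atTop (𝓝 s)) :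
    Tendsto θ atTop atTop := by
  refine ((tendsto_div_natCast hθ).pos_mul_atTop one_pos tendsto_natCast_atTop_atTop).congr' ?_
  filter_upwards [eventually_ne_atTop 0] with N hN
  field

lemma tendsto_sqrt_div_sqrt_natCast
    (hθ : Tendsto (fun N : ℕ ↦ (θ N - N) / √(N : ℝ)) atTop (𝓝 s)) :
    Tendsto (fun N : ℕ ↦ √(θ N) / √N) atTop (𝓝 1) := by
  have hsqrt := (tendsto_div_natCast hθ).sqrt
  rw [Real.sqrt_one] at hsqrt
  exact hsqrt.congr fun N ↦ Real.sqrt_div' _ N.cast_nonneg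

lemma tendsto_sub_div_sqrt
    (hθ : Tendsto (fun N : ℕ ↦ (θ N - N) / √(N : ℝ)) atTop (𝓝 s)) :
    Tendsto (fun N : ℕ ↦ (θ N - N) / √(θ N)) atTop (𝓝 s) := by
  have hdiv := hθ.div (tendsto_sqrt_div_sqrt_natCast hθ) one_ne_zero
  rw [div_one] at hdiv
  refine hdiv.congr' ?_
  filter_upwards [eventually_ne_atTop 0] with N hN
  exact div_div_div_cancel_right₀ (by positivity) _ _

lemma sqrt_mul_poissonWeight_eq {θ : ℝ} (hθ : 0 < θ) {N : ℕ} (hN : N ≠ 0) :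
    √N * poissonWeight θ N =
      Real.exp (N * (Real.log (θ / N) - (θ - N) / N)) * (√2 * Stirling.stirlingSeq N)⁻¹ := by
  have hexp : Real.exp (N * (Real.log (θ / N) - (θ - N) / N)) =
      (θ / N) ^ N * (Real.exp (-θ) * Real.exp 1 ^ N) := by
    rw [show N * (Real.log (θ / N) - (θ - N) / N) = N * Real.log (θ / N) + (-θ + N * 1) by field,
      Real.exp_add, Real.exp_add, Real.exp_nat_mul, Real.exp_nat_mul, Real.exp_log (by positivity)]
  rw [hexp, poissonWeight, Stirling.stirlingSeq, Real.sqrt_mul zero_le_two]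
  field_simp
  rw [← mul_pow, ← mul_pow]
  field_simp

lemma tendsto_sqrt_mul_poissonWeight
    (hθ : Tendsto (fun N : ℕ ↦ (θ N - N) / √(N : ℝ)) atTop (𝓝 s)) :
    Tendsto (fun N ↦ √(θ N) * poissonWeight (θ N) N) atTop (𝓝 (gaussianPDFReal 0 1 s)) := by
  have hsq : Tendsto (fun N : ℕ ↦ (N : ℝ) * ((θ N - N) / N) ^ 2) atTop (𝓝 (s ^ 2)) :=
    (hθ.pow 2).congr fun N ↦ by
      rw [div_pow, Real.sq_sqrt N.cast_nonneg]
      field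
  have hlog := tendsto_mul_comp_of_sub_sq_isLittleO log_one_add_sub_isLittleO_sq
    (tendsto_sub_div_natCast hθ) hsq
  have hstirling : Tendsto (fun N ↦ (√2 * Stirling.stirlingSeq N)⁻¹) atTop
      (𝓝 (√2 * √Real.pi)⁻¹) :=
    (Stirling.tendsto_stirlingSeq_sqrt_pi.const_mul _).inv₀ (by positivity)
  have hprod := (tendsto_sqrt_div_sqrt_natCast hθ).mul (hlog.rexp.mul hstirling)
  convert! hprod.congr' ?_ using 2
  · rw [gaussianPDFReal_zero_one, Real.sqrt_mul zero_le_two]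
    ring_nf
  · filter_upwards [eventually_ne_atTop 0,
      (tendsto_atTop_of_tendsto_sub_div_sqrt hθ).eventually_gt_atTop 0] with N hN hpos
    have hone : 1 + (θ N - N) / N = θ N / N := by field
    rw [hone, ← sqrt_mul_poissonWeight_eq hpos hN]
    field

lemma charFun_map_poissonMeasure_sub_div (r : NNReal) (a b t : ℝ) :
    charFun ((poissonMeasure r).map fun k : ℕ ↦ ((k : ℝ) - a) / b) t =
      Complex.exp (r * (Complex.exp (t / b * Complex.I) - 1) - a * (t / b * Complex.I)) := by
  have hmap : (poissonMeasure r).map (fun k : ℕ ↦ ((k : ℝ) - a) / b) =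
      (((poissonMeasure r).map (Nat.cast : ℕ → ℝ)).map (· + -a)).map (b⁻¹ * ·) := by
    rw [Measure.map_map (by fun_prop) (by fun_prop), Measure.map_map (by fun_prop) (by fun_prop)]
    congr 1 with k
    simp [sub_eq_add_neg, div_eq_inv_mul]
  rw [hmap, charFun_map_mul, charFun_map_add_const, charFun_map_cast_poissonMeasure,
    ← Complex.exp_add]
  have hinner : inner ℝ (-a) (b⁻¹ * t) = -a * (t / b) := by
    rw [Real.inner_apply]
    ring
  rw [hinner, ← div_eq_inv_mul]
  push_cast
  ring_nf

lemma tendsto_mul_cexp_sub_one_sub_mul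
    (hθ : Tendsto (fun N : ℕ ↦ (θ N - N) / √(N : ℝ)) atTop (𝓝 s)) (t : ℝ) :
    Tendsto (fun N : ℕ ↦ θ N * (Complex.exp (t / √N * Complex.I) - 1) -
      N * (t / √N * Complex.I)) atTop (𝓝 (t * s * Complex.I - t ^ 2 / 2)) := by
  have harg : Tendsto (fun N : ℕ ↦ t / √N * Complex.I) atTop (𝓝 0) := by
    have := (tendsto_sqrt_natCast_atTop.const_div_atTop t).ofReal.mul_const Complex.I
    simpa using this
  have hsq : Tendsto (fun N : ℕ ↦ θ N * (t / √N * Complex.I) ^ 2) atTop (𝓝 (-t ^ 2)) := by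
    have hmul := ((tendsto_div_natCast hθ).mul_const (-t ^ 2)).ofReal
    rw [one_mul] at hmul
    push_cast at hmul
    refine hmul.congr fun N ↦ ?_
    have hsqrt : ((√N : ℝ) : ℂ) ^ 2 = N := mod_cast Real.sq_sqrt N.cast_nonneg
    rw [mul_pow, div_pow, hsqrt, Complex.I_sq]
    ring
  have hquad := tendsto_mul_comp_of_sub_sq_isLittleO exp_sub_one_sub_isLittleO_sq harg hsq
  have hlin := hθ.ofReal.mul_const (t * Complex.I)
  convert! (hlin.add hquad).congr fun N ↦ ?_ using 2
  · ring
  · push_cast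
    ring

lemma tendsto_charFun_map_poissonMeasure
    (hθ : Tendsto (fun N : ℕ ↦ (θ N - N) / √(N : ℝ)) atTop (𝓝 s)) (t : ℝ) :
    Tendsto (fun N : ℕ ↦ charFun ((poissonMeasure (θ N).toNNReal).map
      fun k : ℕ ↦ ((k : ℝ) - N) / √N) t) atTop (𝓝 (charFun (gaussianReal s 1) t)) := by
  convert! (tendsto_mul_cexp_sub_one_sub_mul hθ t).cexp.congr' ?_ using 2
  · simp [charFun_gaussianReal]
  · filter_upwards [(tendsto_atTop_of_tendsto_sub_div_sqrt hθ).eventually_gt_atTop 0] with N hN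
    rw [charFun_map_poissonMeasure_sub_div, Real.coe_toNNReal _ hN.le, Complex.ofReal_natCast]

lemma tendsto_map_poissonMeasure_Iio_zero
    (hθ : Tendsto (fun N : ℕ ↦ (θ N - N) / √(N : ℝ)) atTop (𝓝 s)) :
    Tendsto (fun N : ℕ ↦ ((poissonMeasure (θ N).toNNReal).map
      fun k : ℕ ↦ ((k : ℝ) - N) / √N) (Set.Iio 0)) atTop (𝓝 (gaussianReal s 1 (Set.Iio 0))) := by
  let law (N : ℕ) : ProbabilityMeasure ℝ :=
    ⟨(poissonMeasure (θ N).toNNReal).map fun k : ℕ ↦ ((k : ℝ) - N) / √N,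
      Measure.isProbabilityMeasure_map (by fun_prop)⟩
  have hlaw : Tendsto law atTop (𝓝 ⟨gaussianReal s 1, inferInstance⟩) :=
    ProbabilityMeasure.tendsto_iff_tendsto_charFun.2 (tendsto_charFun_map_poissonMeasure hθ)
  have := nullSingletonClass_gaussianReal (μ := s) one_ne_zero
  exact ProbabilityMeasure.tendsto_measure_of_null_frontier_of_tendsto' hlaw (by simp)

lemma gaussianReal_Iio_zero (s : ℝ) :
    gaussianReal s 1 (Set.Iio 0) = gaussianReal 0 1 (Set.Ioi s) := by
  have hmap := gaussianReal_map_const_sub (μ := 0) (v := 1) s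
  rw [sub_zero] at hmap
  rw [← hmap, Measure.map_apply (by fun_prop) measurableSet_Iio]
  simp

lemma map_poissonMeasure_real_Iio_zero {θ : ℝ} (hθ : 0 ≤ θ) (N : ℕ) :
    ((poissonMeasure θ.toNNReal).map fun k : ℕ ↦ ((k : ℝ) - N) / √N).real (Set.Iio 0) =
      ∑ m ∈ Finset.range N, poissonWeight θ m := by
  have hpre : (fun k : ℕ ↦ ((k : ℝ) - N) / √N) ⁻¹' Set.Iio 0 = Finset.range N := by
    ext k
    rcases N.eq_zero_or_pos with rfl | hN
    · simp
    · have : 0 < √(N : ℝ) := by positivity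
      simp [div_neg_iff, this, this.not_gt]
  rw [map_measureReal_apply (by fun_prop) measurableSet_Iio, hpre, ← sum_measureReal_singleton]
  exact Finset.sum_congr rfl fun m _ ↦ by
    rw [poissonMeasure_real_singleton, Real.coe_toNNReal _ hθ, poissonWeight]

lemma tendsto_sum_range_poissonWeight
    (hθ : Tendsto (fun N : ℕ ↦ (θ N - N) / √(N : ℝ)) atTop (𝓝 s)) :
    Tendsto (fun N ↦ ∑ m ∈ Finset.range N, poissonWeight (θ N) m) atTop
      (𝓝 ((gaussianReal 0 1).real (Set.Ioi s))) := by
  have htoReal := (ENNReal.tendsto_toReal (measure_ne_top _ _)).comp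
    (tendsto_map_poissonMeasure_Iio_zero hθ)
  rw [gaussianReal_Iio_zero] at htoReal
  refine htoReal.congr' ?_
  filter_upwards [(tendsto_atTop_of_tendsto_sub_div_sqrt hθ).eventually_ge_atTop 0] with N hN
  exact map_poissonMeasure_real_Iio_zero hN N

end PoissonLimits

section KernelConvergence

open Polynomial ProbabilityTheory

lemma tendsto_scaledCharlier {ι : Type*} {l : Filter ι} {θ : ι → ℝ} {m : ι → ℕ} {s : ℝ}
    (hθ : Tendsto θ l atTop) (hm : Tendsto (fun i ↦ (θ i - m i) / √(θ i)) l (𝓝 s)) (x : ℕ) :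
    Tendsto (fun i ↦ scaledCharlier (θ i) (m i) x) l (𝓝 (aeval s (hermite x))) := by
  induction x using Nat.strong_induction_on with
  | _ x ih =>
    cases x with
    | zero => simpa [scaledCharlier_zero_right] using tendsto_const_nhds
    | succ x =>
      have hcoeff : Tendsto (fun i ↦ x / √(θ i) + (θ i - m i) / √(θ i)) l (𝓝 s) := by
        simpa using ((Real.tendsto_sqrt_atTop.comp hθ).const_div_atTop (x : ℝ)).add hm
      have hrec := (hcoeff.mul (ih x (by lia))).sub ((ih (x - 1) (by lia)).const_mul (x : ℝ))
      rw [hermite_succ_eq, map_sub, map_mul, map_mul, aeval_X, map_natCast]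
      refine hrec.congr' ?_
      filter_upwards [hθ.eventually_gt_atTop 0] with i hi
      rw [scaledCharlier_succ_right hi]

variable {θ : ℕ → ℝ} {s : ℝ}

lemma tendsto_scaledCharlierKernel_succ_left
    (hθ : Tendsto (fun N : ℕ ↦ (θ N - N) / √(N : ℝ)) atTop (𝓝 s)) {x y : ℕ}
    (ih : Tendsto (fun N ↦ scaledCharlierKernel N (θ N) x (y - 1)) atTop
      (𝓝 (scaledHermiteKernel s x (y - 1)))) :
    Tendsto (fun N ↦ scaledCharlierKernel N (θ N) (x + 1) y) atTop
      (𝓝 (scaledHermiteKernel s (x + 1) y)) := by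
  have hmean := tendsto_atTop_of_tendsto_sub_div_sqrt hθ
  have hpoly (z : ℕ) := tendsto_scaledCharlier hmean (tendsto_sub_div_sqrt hθ) z
  have hdiff : Tendsto
      (fun N ↦ scaledCharlier (θ N) N x - scaledCharlier (θ N) N (x + 1) / √(θ N)) atTop
      (𝓝 (aeval s (hermite x))) := by
    simpa using (hpoly x).sub ((hpoly (x + 1)).div_atTop (Real.tendsto_sqrt_atTop.comp hmean))
  have hboundary := ((tendsto_sqrt_mul_poissonWeight hθ).mul hdiff).mul (hpoly y)
  rw [scaledHermiteKernel_succ_left]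
  refine (hboundary.add (ih.const_mul (y : ℝ))).congr' ?_
  filter_upwards [hmean.eventually_gt_atTop 0] with N hN
  rw [scaledCharlierKernel_succ_left hN]

lemma tendsto_scaledCharlierKernel
    (hθ : Tendsto (fun N : ℕ ↦ (θ N - N) / √(N : ℝ)) atTop (𝓝 s)) (x y : ℕ) :
    Tendsto (fun N ↦ scaledCharlierKernel N (θ N) x y) atTop (𝓝 (scaledHermiteKernel s x y)) := by
  have hzero : Tendsto (fun N ↦ scaledCharlierKernel N (θ N) 0 0) atTop
      (𝓝 (scaledHermiteKernel s 0 0)) := by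
    simpa [scaledCharlierKernel, scaledCharlier_zero_right, scaledHermiteKernel_zero_zero]
      using tendsto_sum_range_poissonWeight hθ
  have hright (y : ℕ) : Tendsto (fun N ↦ scaledCharlierKernel N (θ N) y 0) atTop
      (𝓝 (scaledHermiteKernel s y 0)) := by
    induction y with
    | zero => exact hzero
    | succ y ih => exact tendsto_scaledCharlierKernel_succ_left hθ ih
  induction x generalizing y with
  | zero => simpa only [scaledCharlierKernel_comm, scaledHermiteKernel_comm] using hright y
  | succ x ih => exact tendsto_scaledCharlierKernel_succ_left hθ (ih (y - 1))

lemma tendsto_charlierKernel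
    (hθ : Tendsto (fun N : ℕ ↦ (θ N - N) / √(N : ℝ)) atTop (𝓝 s)) (x y : ℕ) :
    Tendsto (fun N ↦ charlierKernel N (θ N) x y) atTop (𝓝 (discreteHermiteKernel s x y)) := by
  rw [discreteHermiteKernel_eq_scaledHermiteKernel]
  refine ((tendsto_scaledCharlierKernel hθ x y).const_mul _).congr' ?_
  filter_upwards [(tendsto_atTop_of_tendsto_sub_div_sqrt hθ).eventually_ge_atTop 0] with N hN
  rw [charlierKernel_eq_scaledCharlierKernel hN]

end KernelConvergence

/-- If `θ(N) > 0` and `(θ(N) − N)/√N → s`, then for every `k ≥ 1` and distinct points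
`y_1, …, y_k ∈ ℕ`, the `k×k` determinants of the Charlier kernel converge to the
corresponding determinant of the discrete Hermite kernel. -/
theorem charlierKernel_det_tendsto_discreteHermiteKernel_det
    (s : ℝ) (θ : ℕ → ℝ) (hpos : ∀ N, 0 < θ N)
    (hlim : Tendsto (fun N : ℕ => (θ N - (N : ℝ)) / Real.sqrt (N : ℝ)) atTop (𝓝 s))
    (k : ℕ) (hk : 1 ≤ k) (y : Fin k → ℕ) (hy : Function.Injective y) :
    Tendsto
      (fun N : ℕ => Matrix.det (Matrix.of fun i j : Fin k => charlierKernel N (θ N) (y i) (y j)))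
      atTop
      (𝓝 (Matrix.det (Matrix.of fun i j : Fin k => discreteHermiteKernel s (y i) (y j)))) := by
  have hentries : Tendsto (fun N : ℕ ↦ Matrix.of fun i j ↦ charlierKernel N (θ N) (y i) (y j))
      atTop (𝓝 (Matrix.of fun i j ↦ discreteHermiteKernel s (y i) (y j))) :=
    tendsto_pi_nhds.2 fun i ↦ tendsto_pi_nhds.2 fun j ↦ tendsto_charlierKernel hlim (y i) (y j)
  exact (continuous_id.matrix_det.tendsto _).comp hentries

end
end
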